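/- Let a, b, c be positive integers and let λ, μ ∈ ℂ. Define φ̄ : ℝ → ℂ → ℂ by φ̄ t z = exp(−2πi·a·t)·(λ + exp(−2πi·b·t)·(μ + exp(−2πi·c·t)·(z − λ − μ))), and define the time-dependent Hamiltonian H̄ : ℝ × ℂ → ℝ by H̄ t z = −π·(a·|z|² + b·|exp(2πi·a·t)·z − λ|² + c·|exp(2πi·(a+b)·t)·z − exp(2πi·b·t)·λ − μ|²). Then: (i) φ̄ 0 = id and φ̄ 1 = id; and (ii) φ̄ is a Hamiltonian flow of H̄, i.e. for every z ∈ ℂ and t ∈ ℝ the curve s ↦ φ̄ s z has derivative Complex.I * ∇(H̄ t) (φ̄ t z) at time t. -/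

import Mathlib

open Real

/-!
The loop `φ̄` is a composition of three rotations: about `0` with winding number `-a`, about `λ`
with winding number `-b`, and about `λ + μ` with winding number `-c`. The rotation about `p` with
winding number `-ν` is the flow of `z ↦ -πν|z - p|²`, and if `φ` and `ψ` are the Hamiltonian flows
of `F` and `G`, then `φ ∘ ψ` is the Hamiltonian flow of `F t + G t ∘ (φ t)⁻¹`. Applying this
composition formula twice gives `H̄`.
-/

section HamiltonianFlow

attribute [local instance] Complex.finrank_real_complex_fact

local notation "ω" => Complex.orientation.areaForm

/-- The Hamiltonian vector field `X_F = i ∇F` of a function on `ℂ`. The sign convention is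
`dF = -ι(X_F)ω`, see `hamiltonianVectorField_eq_iff`. -/
noncomputable def hamiltonianVectorField (F : ℂ → ℝ) (z : ℂ) : ℂ :=
  Complex.I * gradient F z

/-- `φ` is the Hamiltonian flow, starting at the identity, of the time-dependent Hamiltonian `F`.
Differentiability of each `F t` is required so that its gradient is not a junk value. -/
structure IsHamiltonianFlow (F : ℝ → ℂ → ℝ) (φ : ℝ → ℂ → ℂ) : Prop where
  differentiable : ∀ t, Differentiable ℝ (F t)
  map_zero : φ 0 = id
  hasDerivAt : ∀ z t, HasDerivAt (fun s => φ s z) (hamiltonianVectorField (F t) (φ t z)) t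

/-- `f` is a (not necessarily bijective) symplectic map of `ℂ`: its derivatives preserve the
standard area form. -/
structure IsSymplectic (f : ℂ → ℂ) : Prop where
  differentiable : Differentiable ℝ f
  areaForm_fderiv : ∀ z v w, ω (fderiv ℝ f z v) (fderiv ℝ f z w) = ω v w

theorem isSymplectic_const_add_mul_sub {u : ℂ} (hu : ‖u‖ = 1) (w p : ℂ) :
    IsSymplectic fun z => w + u * (z - p) where
  differentiable := by fun_prop
  areaForm_fderiv z v₁ v₂ := by
    have fderiv_eq : fderiv ℝ (fun z => w + u * (z - p)) z = u • ContinuousLinearMap.id ℝ ℂ :=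
      ((((hasFDerivAt_id z).sub_const p).const_mul u).const_add w).fderiv
    have conj_mul_self : starRingEnd ℂ u * u = 1 := by
      rw [Complex.conj_mul', hu, Complex.ofReal_one, one_pow]
    simp only [fderiv_eq, Complex.areaForm, smul_apply, ContinuousLinearMap.id_apply, smul_eq_mul,
      map_mul]
    rw [mul_mul_mul_comm, conj_mul_self, one_mul]

theorem hamiltonianVectorField_eq_iff {F : ℂ → ℝ} {z X : ℂ} :
    hamiltonianVectorField F z = X ↔ ∀ v, fderiv ℝ F z v = -ω X v := by
  have gradient_eq_iff : hamiltonianVectorField F z = X ↔ gradient F z = -(Complex.I * X) := by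
    constructor <;> intro h
    · rw [← h, hamiltonianVectorField, ← mul_assoc, Complex.I_mul_I, neg_one_mul, neg_neg]
    · rw [hamiltonianVectorField, h, mul_neg, ← mul_assoc, Complex.I_mul_I, neg_one_mul, neg_neg]
  have inner_eq (v : ℂ) : inner ℝ (-(Complex.I * X)) v = -ω X v := by
    rw [inner_neg_left, ← Complex.rightAngleRotation,
      Orientation.inner_rightAngleRotation_left]
  simp only [gradient_eq_iff, ← inner_eq, ← inner_gradient_left]
  exact ⟨fun h v => by rw [h], ext_inner_right ℝ⟩

theorem fderiv_apply_eq_neg_areaForm (F : ℂ → ℝ) (z v : ℂ) :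
    fderiv ℝ F z v = -ω (hamiltonianVectorField F z) v :=
  hamiltonianVectorField_eq_iff.mp rfl v

theorem hamiltonianVectorField_add_comp {F G : ℂ → ℝ} {f g : ℂ → ℂ} {z : ℂ}
    (hF : DifferentiableAt ℝ F (f z)) (hG : DifferentiableAt ℝ G z)
    (hf : DifferentiableAt ℝ f z) (hg : IsSymplectic g) (hgf : Function.LeftInverse g f) :
    hamiltonianVectorField (fun w => F w + G (g w)) (f z) =
      hamiltonianVectorField F (f z) + fderiv ℝ f z (hamiltonianVectorField G z) := by
  have hg_at : DifferentiableAt ℝ g (f z) := hg.differentiable (f z)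
  have hG' : DifferentiableAt ℝ G (g (f z)) := by rwa [hgf z]
  have fderiv_fderiv (v : ℂ) : fderiv ℝ g (f z) (fderiv ℝ f z v) = v := by
    rw [← ContinuousLinearMap.comp_apply, ← fderiv_comp z hg_at hf, hgf.comp_eq_id, fderiv_id,
      ContinuousLinearMap.id_apply]
  refine hamiltonianVectorField_eq_iff.mpr fun v => ?_
  calc fderiv ℝ (fun w => F w + G (g w)) (f z) v
      = fderiv ℝ F (f z) v + fderiv ℝ G z (fderiv ℝ g (f z) v) := by
        rw [fderiv_fun_add hF (hG'.fun_comp' _ hg_at), fderiv_fun_comp _ hG' hg_at, hgf z]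
        rfl
    _ = -ω (hamiltonianVectorField F (f z)) v
          - ω (hamiltonianVectorField G z) (fderiv ℝ g (f z) v) := by
        simp only [fderiv_apply_eq_neg_areaForm F, fderiv_apply_eq_neg_areaForm G, sub_eq_add_neg]
    _ = -ω (hamiltonianVectorField F (f z)) v
          - ω (fderiv ℝ f z (hamiltonianVectorField G z)) v := by
        rw [← hg.areaForm_fderiv (f z) (fderiv ℝ f z _), fderiv_fderiv]
    _ = -ω (hamiltonianVectorField F (f z)
          + fderiv ℝ f z (hamiltonianVectorField G z)) v := by
        rw [map_add, LinearMap.add_apply]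
        ring

theorem hasDerivAt_apply_of_differentiableAt_uncurry {𝕜 E F : Type*} [NontriviallyNormedField 𝕜]
    [NormedAddCommGroup E] [NormedSpace 𝕜 E] [NormedAddCommGroup F] [NormedSpace 𝕜 F]
    {φ : 𝕜 → E → F} {γ : 𝕜 → E} {γ' : E} {φ' : F} {t : 𝕜}
    (hφ : DifferentiableAt 𝕜 (Function.uncurry φ) (t, γ t))
    (hφ' : HasDerivAt (fun s => φ s (γ t)) φ' t) (hγ : HasDerivAt γ γ' t) :
    HasDerivAt (fun s => φ s (γ s)) (φ' + fderiv 𝕜 (φ t) (γ t) γ') t := by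
  set D := fderiv 𝕜 (Function.uncurry φ) (t, γ t)
  have time_deriv : D (1, 0) = φ' :=
    HasDerivAt.unique (hφ.hasFDerivAt.comp_hasDerivAt (f := fun s => (s, γ t)) t
      ((hasDerivAt_id t).prodMk (hasDerivAt_const t (γ t)))) hφ'
  have space_deriv : fderiv 𝕜 (φ t) (γ t) γ' = D (0, γ') :=
    DFunLike.congr_fun (hφ.hasFDerivAt.comp (γ t) (hasFDerivAt_prodMk_right t (γ t))).fderiv γ'
  rw [← time_deriv, space_deriv, ← map_add, Prod.mk_add_mk, add_zero, zero_add]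
  exact hφ.hasFDerivAt.comp_hasDerivAt t ((hasDerivAt_id t).prodMk hγ)

theorem IsHamiltonianFlow.comp {F G : ℝ → ℂ → ℝ} {φ ψ χ : ℝ → ℂ → ℂ}
    (hφ : IsHamiltonianFlow F φ) (hψ : IsHamiltonianFlow G ψ)
    (hφ_diff : Differentiable ℝ (Function.uncurry φ)) (hχ : ∀ t, IsSymplectic (χ t))
    (hχφ : ∀ t, Function.LeftInverse (χ t) (φ t)) :
    IsHamiltonianFlow (fun t z => F t z + G t (χ t z)) (fun t z => φ t (ψ t z)) where
  differentiable t :=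
    (hφ.differentiable t).fun_add ((hψ.differentiable t).comp (hχ t).differentiable)
  map_zero := by simp only [hφ.map_zero, hψ.map_zero, id, Function.id_def]
  hasDerivAt z t := by
    have hφ_at : DifferentiableAt ℝ (φ t) (ψ t z) :=
      (hφ_diff (t, ψ t z)).comp (ψ t z) (hasFDerivAt_prodMk_right t (ψ t z)).differentiableAt
    rw [hamiltonianVectorField_add_comp (hφ.differentiable t _) (hψ.differentiable t _) hφ_at
      (hχ t) (hχφ t)]
    exact hasDerivAt_apply_of_differentiableAt_uncurry (hφ_diff _) (hφ.hasDerivAt _ t)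
      (hψ.hasDerivAt z t)

/-- The rotation of `ℂ` about `p` by the angle `-2πνt`; as `t` varies, a circle action of
frequency `-ν`. -/
noncomputable def rotationAbout (ν : ℝ) (p : ℂ) (t : ℝ) (z : ℂ) : ℂ :=
  p + Complex.exp (-(2 * (π : ℂ) * Complex.I) * (ν : ℂ) * (t : ℂ)) * (z - p)

/-- The harmonic oscillator centred at `p` that generates `rotationAbout ν p`. -/
noncomputable def rotationHamiltonian (ν : ℝ) (p z : ℂ) : ℝ :=
  -π * (ν * ‖z - p‖ ^ 2)

section Rotation

variable (ν : ℝ) (p : ℂ)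

theorem rotationAbout_zero : rotationAbout ν p 0 = id := by
  ext z
  simp [rotationAbout]

theorem rotationAbout_intCast_one (n : ℤ) : rotationAbout n p 1 = id := by
  have exp_eq_one : Complex.exp (-(2 * (π : ℂ) * Complex.I) * (n : ℂ)) = 1 :=
    Complex.exp_eq_one_iff.mpr ⟨-n, by push_cast; ring⟩
  ext z
  simp only [rotationAbout, Complex.ofReal_intCast, Complex.ofReal_one, mul_one, exp_eq_one,
    one_mul, add_sub_cancel, id]

theorem rotationAbout_neg (t : ℝ) (z : ℂ) :
    rotationAbout ν p (-t) z =
      p + Complex.exp ((2 * (π : ℂ) * Complex.I) * (ν : ℂ) * (t : ℂ)) * (z - p) := by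
  simp only [rotationAbout, Complex.ofReal_neg, neg_mul, mul_neg, neg_neg]

theorem leftInverse_rotationAbout_neg (t : ℝ) :
    Function.LeftInverse (rotationAbout ν p (-t)) (rotationAbout ν p t) := fun z => by
  rw [rotationAbout_neg, rotationAbout, add_sub_cancel_left, ← mul_assoc, ← Complex.exp_add]
  simp only [neg_mul, add_neg_cancel, Complex.exp_zero, one_mul, add_sub_cancel]

theorem differentiable_uncurry_rotationAbout :
    Differentiable ℝ (Function.uncurry (rotationAbout ν p)) := by
  unfold rotationAbout Function.uncurry
  fun_prop

theorem isSymplectic_rotationAbout (t : ℝ) : IsSymplectic (rotationAbout ν p t) := by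
  refine isSymplectic_const_add_mul_sub ?_ p p
  simp [Complex.norm_exp]

theorem hamiltonianVectorField_rotationHamiltonian (z : ℂ) :
    hamiltonianVectorField (rotationHamiltonian ν p) z =
      -(2 * (π : ℂ) * Complex.I) * (ν : ℂ) * (z - p) := by
  refine hamiltonianVectorField_eq_iff.mpr fun v => ?_
  have field_eq_smul : -(2 * (π : ℂ) * Complex.I) * (ν : ℂ) * (z - p) =
      (-(2 * π * ν)) • Complex.orientation.rightAngleRotation (z - p) := by
    rw [Complex.rightAngleRotation, Complex.real_smul]
    push_cast
    ring
  have norm_sq_deriv := ((hasFDerivAt_id (𝕜 := ℝ) z).sub_const p).norm_sq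
  calc fderiv ℝ (rotationHamiltonian ν p) z v
      = -π * (ν * (2 * inner ℝ (z - p) v)) := by
        rw [((norm_sq_deriv.const_mul ν).const_mul (-π)).fderiv (f := rotationHamiltonian ν p)]
        simp only [smul_apply, ContinuousLinearMap.comp_apply, ContinuousLinearMap.id_apply,
          coe_innerSL_apply, id, smul_eq_mul, nsmul_eq_mul, Nat.cast_ofNat]
    _ = -ω (-(2 * (π : ℂ) * Complex.I) * (ν : ℂ) * (z - p)) v := by
        rw [field_eq_smul, map_smul, LinearMap.smul_apply,
          Orientation.areaForm_rightAngleRotation_left, smul_eq_mul]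
        ring

theorem hasDerivAt_rotationAbout (z : ℂ) (t : ℝ) :
    HasDerivAt (fun s => rotationAbout ν p s z)
      (-(2 * (π : ℂ) * Complex.I) * (ν : ℂ) * (rotationAbout ν p t z - p)) t := by
  have exponent_deriv := (Complex.ofRealCLM.hasDerivAt (x := t)).const_mul
    (-(2 * (π : ℂ) * Complex.I) * (ν : ℂ))
  refine ((exponent_deriv.cexp.mul_const (z - p)).const_add p).congr_deriv ?_
  simp only [rotationAbout, Complex.ofRealCLM_apply, Complex.ofReal_one]
  ring

theorem isHamiltonianFlow_rotationAbout :
    IsHamiltonianFlow (fun _ => rotationHamiltonian ν p) (rotationAbout ν p) where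
  differentiable _ :=
    ((((differentiable_id.sub_const p).norm_sq ℝ).const_mul ν).const_mul (-π))
  map_zero := rotationAbout_zero ν p
  hasDerivAt z t := by
    rw [hamiltonianVectorField_rotationHamiltonian]
    exact hasDerivAt_rotationAbout ν p z t

theorem IsHamiltonianFlow.rotationAbout_comp {G : ℝ → ℂ → ℝ} {ψ : ℝ → ℂ → ℂ}
    (hψ : IsHamiltonianFlow G ψ) :
    IsHamiltonianFlow (fun t z => rotationHamiltonian ν p z + G t (rotationAbout ν p (-t) z))
      (fun t z => rotationAbout ν p t (ψ t z)) :=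
  (isHamiltonianFlow_rotationAbout ν p).comp hψ (differentiable_uncurry_rotationAbout ν p)
    (fun t => isSymplectic_rotationAbout ν p (-t)) (leftInverse_rotationAbout_neg ν p)

end Rotation

end HamiltonianFlow

theorem stmt_10_general (a b c : ℤ) (lam mu : ℂ)
    (phibar : ℝ → ℂ → ℂ)
    (hphibar : ∀ (t : ℝ) (z : ℂ), phibar t z =
      Complex.exp (-(2 * (π : ℂ) * Complex.I) * (a : ℂ) * (t : ℂ)) *
        (lam + Complex.exp (-(2 * (π : ℂ) * Complex.I) * (b : ℂ) * (t : ℂ)) *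
          (mu + Complex.exp (-(2 * (π : ℂ) * Complex.I) * (c : ℂ) * (t : ℂ)) * (z - lam - mu))))
    (Hbar : ℝ → ℂ → ℝ)
    (hHbar : ∀ (t : ℝ) (z : ℂ), Hbar t z =
      -π * ((a : ℝ) * ‖z‖ ^ 2 +
        (b : ℝ) * ‖Complex.exp ((2 * (π : ℂ) * Complex.I) * (a : ℂ) * (t : ℂ)) * z - lam‖ ^ 2 +
        (c : ℝ) * ‖Complex.exp ((2 * (π : ℂ) * Complex.I) * ((a : ℂ) + (b : ℂ)) * (t : ℂ)) * z -
          Complex.exp ((2 * (π : ℂ) * Complex.I) * (b : ℂ) * (t : ℂ)) * lam - mu‖ ^ 2)) :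
    phibar 0 = id ∧ phibar 1 = id ∧
    (∀ (z : ℂ) (t : ℝ),
      HasDerivAt (fun s => phibar s z) (Complex.I * gradient (Hbar t) (phibar t z)) t) := by
  have phibar_eq : phibar = fun t z =>
      rotationAbout a 0 t (rotationAbout b lam t (rotationAbout c (lam + mu) t z)) := by
    ext t z
    simp only [hphibar, rotationAbout, Complex.ofReal_intCast]
    ring
  have Hbar_eq : Hbar = fun t z => rotationHamiltonian a 0 z +
      (rotationHamiltonian b lam (rotationAbout a 0 (-t) z) +
        rotationHamiltonian c (lam + mu)
          (rotationAbout b lam (-t) (rotationAbout a 0 (-t) z))) := by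
    ext t z
    have exp_add_eq : Complex.exp ((2 * (π : ℂ) * Complex.I) * ((a : ℂ) + (b : ℂ)) * (t : ℂ)) =
        Complex.exp ((2 * (π : ℂ) * Complex.I) * (b : ℂ) * (t : ℂ)) *
          Complex.exp ((2 * (π : ℂ) * Complex.I) * (a : ℂ) * (t : ℂ)) := by
      rw [← Complex.exp_add]
      ring_nf
    rw [hHbar, exp_add_eq]
    simp only [rotationHamiltonian, rotationAbout_neg, Complex.ofReal_intCast, zero_add, sub_zero,
      mul_sub, mul_add, mul_assoc, add_assoc, add_sub_add_left_eq_sub, sub_sub]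
  have flow : IsHamiltonianFlow Hbar phibar := by
    rw [phibar_eq, Hbar_eq]
    exact ((isHamiltonianFlow_rotationAbout c (lam + mu)).rotationAbout_comp b lam)
      |>.rotationAbout_comp a 0
  refine ⟨flow.map_zero, ?_, flow.hasDerivAt⟩
  simp only [phibar_eq, rotationAbout_intCast_one, id, Function.id_def]

/-- with `a, b, c` positive integers and `λ, μ ∈ ℂ`, the loop
`φ̄ t z = exp(−2πi a t)(λ + exp(−2πi b t)(μ + exp(−2πi c t)(z − λ − μ)))` is based at the
identity (`φ̄ 0 = φ̄ 1 = id`) and is the Hamiltonian flow of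
`H̄ t z = −π (a|z|² + b|exp(2πi a t) z − λ|² + c|exp(2πi(a+b)t) z − exp(2πi b t) λ − μ|²)`. -/
theorem stmt_10 (a b c : ℕ) (ha : 0 < a) (hb : 0 < b) (hc : 0 < c) (lam mu : ℂ)
    (phibar : ℝ → ℂ → ℂ)
    (hphibar : ∀ (t : ℝ) (z : ℂ), phibar t z =
      Complex.exp (-(2 * (π : ℂ) * Complex.I) * (a : ℂ) * (t : ℂ)) *
        (lam + Complex.exp (-(2 * (π : ℂ) * Complex.I) * (b : ℂ) * (t : ℂ)) *
          (mu + Complex.exp (-(2 * (π : ℂ) * Complex.I) * (c : ℂ) * (t : ℂ)) * (z - lam - mu))))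
    (Hbar : ℝ → ℂ → ℝ)
    (hHbar : ∀ (t : ℝ) (z : ℂ), Hbar t z =
      -π * ((a : ℝ) * ‖z‖ ^ 2 +
        (b : ℝ) * ‖Complex.exp ((2 * (π : ℂ) * Complex.I) * (a : ℂ) * (t : ℂ)) * z - lam‖ ^ 2 +
        (c : ℝ) * ‖Complex.exp ((2 * (π : ℂ) * Complex.I) * ((a : ℂ) + (b : ℂ)) * (t : ℂ)) * z -
          Complex.exp ((2 * (π : ℂ) * Complex.I) * (b : ℂ) * (t : ℂ)) * lam - mu‖ ^ 2)) :
    phibar 0 = id ∧ phibar 1 = id ∧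
    (∀ (z : ℂ) (t : ℝ),
      HasDerivAt (fun s => phibar s z) (Complex.I * gradient (Hbar t) (phibar t z)) t) := by
  exact stmt_10_general a b c lam mu phibar (by exact_mod_cast hphibar) Hbar
    (by exact_mod_cast hHbar)
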